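/- Let C be an [n, k, d]_q MDS code with minimum distance d ≥ 3, and let w be a natural number with d - 1 ≤ w ≤ n. Then the overall number A_w^Σ(V^{(1)}) of Hamming-weight-w vectors lying in cosets of C of weight exactly 1 satisfies A_w^Σ(V^{(1)}) = n(q-1) · [ A_w(C) - ε · ( C(n,w) C(w-1, d-2) - C(n-1, w-1) C(w-2, d-3) ) ], as an identity of integers. -/

import Mathlib

open Finset

/-- The weight of the coset `x + C` of the linear code `C ⊆ F_q^n`, i.e. the smallest
Hamming weight of a vector in `x + C`; equivalently the Hamming distance from `x` to `C`. -/
noncomputable def cosetWeight {F : Type*} [Field F] [Fintype F] [DecidableEq F] {n : ℕ}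
    (C : Submodule F (Fin n → F)) (x : Fin n → F) : ℕ :=
  sInf {m : ℕ | ∃ c ∈ C, hammingNorm (x - c) = m}

/-- `A_w(C)`: the number of codewords of `C` of Hamming weight `w`. -/
noncomputable def numCodewordsOfWeight {F : Type*} [Field F] [Fintype F] [DecidableEq F] {n : ℕ}
    (C : Submodule F (Fin n → F)) (w : ℕ) : ℕ :=
  {x : Fin n → F | x ∈ C ∧ hammingNorm x = w}.ncard

/-- `A_w^Σ(V^{(W)})`: the overall number of Hamming-weight-`w` vectors of `F_q^n` lying in
cosets of `C` of weight exactly `W`. -/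
noncomputable def numVectorsCosetExact {F : Type*} [Field F] [Fintype F] [DecidableEq F] {n : ℕ}
    (C : Submodule F (Fin n → F)) (w W : ℕ) : ℕ :=
  {x : Fin n → F | hammingNorm x = w ∧ cosetWeight C x = W}.ncard

/-- `A_w^Σ(V^{≤W})`: the overall number of Hamming-weight-`w` vectors of `F_q^n` lying in
cosets of `C` of weight at most `W`. -/
noncomputable def numVectorsCosetLe {F : Type*} [Field F] [Fintype F] [DecidableEq F] {n : ℕ}
    (C : Submodule F (Fin n → F)) (w W : ℕ) : ℕ :=
  {x : Fin n → F | hammingNorm x = w ∧ cosetWeight C x ≤ W}.ncard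

/-- The code `C` has minimum distance `d`: every nonzero codeword has Hamming weight at
least `d`, and some nonzero codeword has Hamming weight exactly `d`. -/
def HasMinDist {F : Type*} [Field F] [Fintype F] [DecidableEq F] {n : ℕ}
    (C : Submodule F (Fin n → F)) (d : ℕ) : Prop :=
  (∀ c ∈ C, c ≠ 0 → d ≤ hammingNorm c) ∧ ∃ c ∈ C, c ≠ 0 ∧ hammingNorm c = d

/-- The code `C` has covering radius `R`: every vector of `F_q^n` is at Hamming distance at
most `R` from `C` and some vector is at Hamming distance exactly `R` from `C`. -/
def HasCoveringRadius {F : Type*} [Field F] [Fintype F] [DecidableEq F] {n : ℕ}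
    (C : Submodule F (Fin n → F)) (R : ℕ) : Prop :=
  (∀ x : Fin n → F, cosetWeight C x ≤ R) ∧ ∃ x : Fin n → F, cosetWeight C x = R

/-- `V_m(t) = ∑_{i=0}^t (q-1)^i C(m,i)`, the volume of a Hamming sphere of radius `t`
in `F_q^m`, as a rational number. -/
def sphereVol (q m t : ℕ) : ℚ :=
  ∑ i ∈ Finset.range (t + 1), ((q : ℚ) - 1) ^ i * (m.choose i : ℚ)

/-!
A vector lies in a coset of weight `1` iff it is outside `C` but agrees with a codeword off a single
coordinate `i`, and `i` is unique because `d ≥ 3`. So these vectors are partitioned by the sets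
`(C + ⟨eᵢ⟩) \ C`. The words of `C + ⟨eᵢ⟩` are those of the code punctured at `i`, which is MDS of
minimum distance `d - 1`, with an arbitrary entry inserted at `i`.

An MDS code has `q ^ (#S + 1 - d)` codewords supported in `S`, so Möbius inversion gives the number
of codewords with support exactly `S` as the `#S`-th forward difference at `0` of
`s ↦ q ^ (s + 1 - d)`. Lowering `d` by one shifts this function, and also multiplies it by `q` up to
a step function, whose differences are the binomial coefficients of the formula.
-/

section ForwardDifference

lemma eq_fwdDiff_iter_of_sum_powerset {ι M : Type*} [AddCommGroup M] {g : Finset ι → M}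
    {f : ℕ → M} (h : ∀ S : Finset ι, ∑ T ∈ S.powerset, g T = f #S) (S : Finset ι) :
    g S = (fwdDiff 1)^[#S] f 0 := by
  classical
  induction S using Finset.strongInduction with
  | H S ih =>
    have newton : ∑ T ∈ S.powerset, (fwdDiff 1)^[#T] f 0 = f #S := by
      rw [sum_powerset_apply_card (fun m ↦ (fwdDiff 1)^[m] f 0)]
      simpa using (shift_eq_sum_fwdDiff_iter 1 f #S 0).symm
    have proper : ∑ T ∈ S.powerset.erase S, g T = ∑ T ∈ S.powerset.erase S, (fwdDiff 1)^[#T] f 0 :=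
      sum_congr rfl fun T hT ↦ ih T (mem_ssubsets.1 hT)
    have total := (h S).trans newton.symm
    rwa [← add_sum_erase _ _ (mem_powerset_self S), ← add_sum_erase _ _ (mem_powerset_self S),
      proper, add_left_inj] at total

lemma fwdDiff_iter_ite_eq (v e : ℕ) :
    (fwdDiff 1)^[v] (fun s ↦ if s = e then (1 : ℤ) else 0) 0 = (-1) ^ (v + e) * v.choose e := by
  rw [fwdDiff_iter_eq_sum_shift]
  simp only [smul_eq_mul, mul_one, zero_add, mul_ite, mul_zero, sum_ite_eq', mem_range]
  split_ifs with he
  · rw [show v + e = (v - e) + 2 * e by omega, pow_add, pow_mul, neg_one_sq, one_pow, mul_one]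
  · rw [Nat.choose_eq_zero_of_lt (by omega), Nat.cast_zero, mul_zero]

lemma fwdDiff_iter_succ_ite_le (v e : ℕ) :
    (fwdDiff 1)^[v + 1] (fun s ↦ if s ≤ e then (1 : ℤ) else 0) 0
      = -((-1) ^ (v + e) * v.choose e) := by
  have hΔ : fwdDiff 1 (fun s ↦ if s ≤ e then (1 : ℤ) else 0)
      = (-1 : ℤ) • fun s ↦ if s = e then (1 : ℤ) else 0 := by
    ext s
    simp only [fwdDiff, Pi.smul_apply, smul_eq_mul]
    split_ifs <;> omega
  rw [Function.iterate_succ_apply, hΔ, fwdDiff_iter_const_smul, Pi.smul_apply,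
    fwdDiff_iter_ite_eq, neg_one_smul]

end ForwardDifference

section SupportCount

/-- The number of codewords with a prescribed support of size `w` in a `q`-ary MDS code of minimum
distance `d`, see `IsMDS.ncard_hammingSupport_eq`. The truncated exponent `s + 1 - d` is
intended: for `s < d` only the zero codeword is supported on a given set of `s` coordinates. -/
def mdsSupportCount (q : ℤ) (d w : ℕ) : ℤ :=
  (fwdDiff 1)^[w] (fun s : ℕ ↦ q ^ (s + 1 - d)) 0

lemma mdsSupportCount_eq_add (q : ℤ) (d w : ℕ) :
    mdsSupportCount q d w = mdsSupportCount q (d + 1) w + mdsSupportCount q (d + 1) (w + 1) := by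
  have hshift : (fwdDiff 1)^[w] (fun s : ℕ ↦ q ^ (s + 1 - d)) 0
      = (fwdDiff 1)^[w] (fun s : ℕ ↦ q ^ (s + 1 - (d + 1))) 1 := by
    simpa only [Nat.add_sub_add_right, zero_add] using
      fwdDiff_iter_comp_add 1 (fun s : ℕ ↦ q ^ (s + 1 - (d + 1))) 1 w 0
  rw [mdsSupportCount, hshift, mdsSupportCount, mdsSupportCount, Function.iterate_succ_apply',
    fwdDiff, zero_add, add_sub_cancel]

lemma mdsSupportCount_eq_mul_add (q : ℤ) (e v : ℕ) :
    mdsSupportCount q (e + 1) (v + 1)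
      = q * mdsSupportCount q (e + 2) (v + 1) + (q - 1) * ((-1) ^ (v + e) * v.choose e) := by
  have hf : (fun s : ℕ ↦ q ^ (s + 1 - (e + 1)))
      = q • (fun s : ℕ ↦ q ^ (s + 1 - (e + 2)))
        + (1 - q) • fun s ↦ if s ≤ e then (1 : ℤ) else 0 := by
    ext s
    simp only [Pi.add_apply, Pi.smul_apply, smul_eq_mul]
    split_ifs with hs
    · rw [show s + 1 - (e + 1) = 0 by omega, show s + 1 - (e + 2) = 0 by omega]; ring
    · rw [show s + 1 - (e + 1) = s + 1 - (e + 2) + 1 by omega]; ring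
  simp only [mdsSupportCount]
  rw [hf, fwdDiff_iter_add, fwdDiff_iter_const_smul, fwdDiff_iter_const_smul]
  simp only [Pi.add_apply, Pi.smul_apply, smul_eq_mul, fwdDiff_iter_succ_ite_le]
  ring

lemma sub_one_mul_mdsSupportCount (q : ℤ) (e v : ℕ) :
    (q - 1) * mdsSupportCount q (e + 1) (v + 1)
      = q * mdsSupportCount q (e + 2) (v + 2) - (q - 1) * ((-1) ^ (v + e) * v.choose e) := by
  linear_combination q * mdsSupportCount_eq_add q (e + 1) (v + 1)
    - mdsSupportCount_eq_mul_add q e v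

end SupportCount

section MDS

variable {ι F : Type*} [Fintype ι] [Field F] [DecidableEq F]

/-- The support of a vector as a `Finset`; its cardinality is `hammingNorm x` by definition. -/
def hammingSupport (x : ι → F) : Finset ι := {i | x i ≠ 0}

lemma hammingSupport_subset_iff {x : ι → F} {S : Finset ι} :
    hammingSupport x ⊆ S ↔ x ∈ Pi.spanSubset F (S : Set ι) := by
  simp only [hammingSupport, subset_iff, mem_filter_univ, Pi.mem_spanSubset_iff, mem_coe]
  exact forall_congr' fun i ↦ not_imp_comm

/-- `C` is a maximum distance separable code of minimum distance `d`. Only a lower bound on the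
weights is required: for `C ≠ ⊥` the Singleton bound makes it sharp. The zero code counts as MDS,
with `d` one more than its length. -/
structure IsMDS (C : Submodule F (ι → F)) (d : ℕ) : Prop where
  le_hammingNorm : ∀ c ∈ C, c ≠ 0 → d ≤ hammingNorm c
  add_finrank : d + Module.finrank F C = Fintype.card ι + 1

lemma disjoint_spanSubset_of_card_lt {C : Submodule F (ι → F)} {d : ℕ}
    (hC : ∀ c ∈ C, c ≠ 0 → d ≤ hammingNorm c) {U : Finset ι} (hU : #U < d) :
    Disjoint C (Pi.spanSubset F (U : Set ι)) := by
  refine Submodule.disjoint_def.2 fun c hcC hcU ↦ by_contra fun hc ↦ ?_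
  have : hammingNorm c ≤ #U := card_le_card (hammingSupport_subset_iff.2 hcU)
  have := hC c hcC hc
  omega

lemma sum_ncard_hammingSupport_eq [Finite F] (C : Submodule F (ι → F)) (𝒯 : Finset (Finset ι)) :
    ∑ T ∈ 𝒯, {x | x ∈ C ∧ hammingSupport x = T}.ncard
      = {x | x ∈ C ∧ hammingSupport x ∈ 𝒯}.ncard := by
  classical
  have := Fintype.ofFinite F
  simp only [Set.ncard_eq_toFinset_card']
  rw [card_eq_sum_card_fiberwise (f := hammingSupport) (t := 𝒯) fun x hx ↦ by simp_all]
  refine sum_congr rfl fun T hT ↦ congrArg card ?_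
  ext x
  simp only [Set.mem_toFinset, Set.mem_ofPred_eq, mem_filter]
  exact ⟨fun h ↦ ⟨⟨h.1, h.2 ▸ hT⟩, h.2⟩, fun h ↦ ⟨h.1.1, h.2⟩⟩

namespace IsMDS

variable {C : Submodule F (ι → F)} {d : ℕ}

lemma finrank_inf_spanSubset (hC : IsMDS C d) (S : Finset ι) :
    Module.finrank F (C ⊓ Pi.spanSubset F (S : Set ι) : Submodule F (ι → F)) = #S + 1 - d := by
  have : #S ≤ Fintype.card ι := card_le_univ S
  have : Module.finrank F C ≤ Fintype.card ι := by
    simpa only [Module.finrank_fintype_fun_eq_card] using Submodule.finrank_le C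
  have := hC.add_finrank
  obtain ⟨U, hUS, hU⟩ := exists_subset_card_eq (s := S) (n := #S - (#S + 1 - d)) (by omega)
  set VS := Pi.spanSubset F (S : Set ι)
  set VU := Pi.spanSubset F (U : Set ι)
  have hVS : Module.finrank F VS = #S := by rw [Pi.dim_spanSubset, Set.ncard_coe_finset]
  have hVU : Module.finrank F VU = #U := by rw [Pi.dim_spanSubset, Set.ncard_coe_finset]
  have lower : Module.finrank F C + #S
      ≤ Fintype.card ι + Module.finrank F (C ⊓ VS : Submodule F (ι → F)) := by
    have hsup : Module.finrank F (C ⊔ VS : Submodule F (ι → F)) ≤ Fintype.card ι := by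
      simpa only [Module.finrank_fintype_fun_eq_card] using Submodule.finrank_le (C ⊔ VS)
    have := Submodule.finrank_sup_add_finrank_inf_eq C VS
    omega
  have upper : Module.finrank F (C ⊓ VS : Submodule F (ι → F)) + #U ≤ #S := by
    have hdisj : Disjoint (C ⊓ VS) VU :=
      (disjoint_spanSubset_of_card_lt hC.le_hammingNorm (by omega)).mono_left inf_le_left
    have hUV : VU ≤ VS := Submodule.span_mono (Set.image_mono (coe_subset.2 hUS))
    have hle := Submodule.finrank_mono (sup_le (inf_le_right : C ⊓ VS ≤ VS) hUV)
    have := Submodule.finrank_sup_add_finrank_inf_eq (C ⊓ VS) VU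
    rw [hdisj.eq_bot, finrank_bot] at this
    omega
  omega

variable [Fintype F]

lemma ncard_hammingSupport_subset (hC : IsMDS C d) (S : Finset ι) :
    {x | x ∈ C ∧ hammingSupport x ⊆ S}.ncard = Fintype.card F ^ (#S + 1 - d) := by
  have hset : {x | x ∈ C ∧ hammingSupport x ⊆ S}
      = (C ⊓ Pi.spanSubset F (S : Set ι) : Submodule F (ι → F)) := by
    ext x
    simp only [Set.mem_ofPred_eq, hammingSupport_subset_iff, SetLike.mem_coe, Submodule.mem_inf]
  rw [hset, ← Nat.card_coe_set_eq, SetLike.coe_sort_coe,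
    Module.natCard_eq_pow_finrank (K := F), hC.finrank_inf_spanSubset, Nat.card_eq_fintype_card]

lemma ncard_hammingSupport_eq (hC : IsMDS C d) (S : Finset ι) :
    ({x | x ∈ C ∧ hammingSupport x = S}.ncard : ℤ) = mdsSupportCount (Fintype.card F) d #S := by
  refine eq_fwdDiff_iter_of_sum_powerset
    (g := fun S ↦ ({x | x ∈ C ∧ hammingSupport x = S}.ncard : ℤ)) (fun S ↦ ?_) S
  exact_mod_cast (sum_ncard_hammingSupport_eq C S.powerset).trans
    (by simpa only [mem_powerset] using hC.ncard_hammingSupport_subset S)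

theorem numCodewordsOfWeight_eq {n d : ℕ} {C : Submodule F (Fin n → F)} (hC : IsMDS C d) (w : ℕ) :
    (numCodewordsOfWeight C w : ℤ) = n.choose w * mdsSupportCount (Fintype.card F) d w := by
  have hset : {x | x ∈ C ∧ hammingNorm x = w}
      = {x | x ∈ C ∧ hammingSupport x ∈ powersetCard w univ} := by
    simp only [mem_powersetCard_univ]
    rfl
  rw [numCodewordsOfWeight, hset, ← sum_ncard_hammingSupport_eq, Nat.cast_sum,
    sum_congr rfl fun T hT ↦ (hC.ncard_hammingSupport_eq T).trans
      (congrArg _ (mem_powersetCard_univ.1 hT)),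
    sum_const, card_powersetCard, card_univ, Fintype.card_fin, nsmul_eq_mul]

end IsMDS

end MDS

section Puncture

variable {F : Type*} [Field F] {n : ℕ}

variable (F) in
/-- Deletion of coordinate `i`, as a linear map. -/
def deleteCoord (i : Fin (n + 1)) :
    (Fin (n + 1) → F) →ₗ[F] (Fin n → F) :=
  LinearMap.funLeft F F i.succAbove

/-- The code `C` punctured at coordinate `i`. -/
def puncture (C : Submodule F (Fin (n + 1) → F)) (i : Fin (n + 1)) : Submodule F (Fin n → F) :=
  C.map (deleteCoord F i)

/-- The code `C + ⟨eᵢ⟩`: the vectors which agree with a codeword off coordinate `i`, encoded as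
the vectors whose puncturing at `i` lies in the punctured code. -/
def freeAt (C : Submodule F (Fin (n + 1) → F)) (i : Fin (n + 1)) :
    Submodule F (Fin (n + 1) → F) :=
  (puncture C i).comap (deleteCoord F i)

lemma le_freeAt (C : Submodule F (Fin (n + 1) → F)) (i : Fin (n + 1)) : C ≤ freeAt C i :=
  Submodule.le_comap_map _ _

lemma mem_freeAt {C : Submodule F (Fin (n + 1) → F)} {i : Fin (n + 1)} {x : Fin (n + 1) → F} :
    x ∈ freeAt C i ↔ ∃ c ∈ C, ∀ j ≠ i, c j = x j := by
  simp only [freeAt, puncture, Submodule.mem_comap, Submodule.mem_map]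
  refine exists_congr fun c ↦ and_congr_right fun _ ↦ funext_iff.trans ?_
  rw [Fin.forall_iff_succAbove i]
  simp only [deleteCoord, LinearMap.funLeft_apply, ne_eq, not_true_eq_false, false_imp_iff,
    Fin.succAbove_ne, not_false_eq_true, true_imp_iff, true_and]

lemma deleteCoord_insertNth (i : Fin (n + 1)) (a : F) (y : Fin n → F) :
    deleteCoord F i (i.insertNth a y) = y :=
  Fin.removeNth_insertNth (α := fun _ ↦ F) i a y

variable [DecidableEq F]

lemma hammingNorm_insertNth (i : Fin (n + 1)) (a : F) (y : Fin n → F) :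
    hammingNorm (i.insertNth a y : Fin (n + 1) → F) = (if a = 0 then 0 else 1) + hammingNorm y := by
  simp only [hammingNorm, card_filter, Fin.sum_univ_succAbove _ i, Fin.insertNth_apply_same,
    Fin.insertNth_apply_succAbove, ite_not]

protected lemma IsMDS.puncture {C : Submodule F (Fin (n + 1) → F)} {d : ℕ}
    (hC : IsMDS C (d + 1)) (hd : 1 ≤ d) (i : Fin (n + 1)) : IsMDS (puncture C i) d := by
  have hnorm : ∀ c ∈ C, c ≠ 0 → d ≤ hammingNorm (deleteCoord F i c) := by
    intro c hc hc0
    have hle := hC.le_hammingNorm c hc hc0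
    rw [← Fin.insertNth_self_removeNth i c, hammingNorm_insertNth] at hle
    change d ≤ hammingNorm (i.removeNth c)
    split_ifs at hle <;> omega
  refine ⟨?_, ?_⟩
  · rintro _ ⟨c, hc, rfl⟩ hc0
    exact hnorm c hc (by rintro rfl; exact hc0 (map_zero _))
  · have hinj : Function.Injective ((deleteCoord F i).domRestrict C) := by
      refine (injective_iff_map_eq_zero _).2 fun c hc ↦ by_contra fun hc0 ↦ ?_
      have := hnorm c c.2 (by simpa using hc0)
      rw [show deleteCoord F i c = 0 from hc, hammingNorm_zero] at this
      omega
    have := hC.add_finrank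
    rw [puncture, ← LinearMap.range_domRestrict, LinearMap.finrank_range_of_inj hinj]
    simp only [Fintype.card_fin] at this ⊢
    omega

lemma freeAt_inf_freeAt {C : Submodule F (Fin (n + 1) → F)}
    (hC : ∀ c ∈ C, c ≠ 0 → 3 ≤ hammingNorm c) {i j : Fin (n + 1)} (hij : i ≠ j) :
    freeAt C i ⊓ freeAt C j = C := by
  refine le_antisymm (fun x hx ↦ ?_) (le_inf (le_freeAt C i) (le_freeAt C j))
  obtain ⟨c, hc, hci⟩ := mem_freeAt.1 hx.1
  obtain ⟨c', hc', hcj⟩ := mem_freeAt.1 hx.2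
  have hdiff : c - c' ∈ Pi.spanSubset F (({i, j} : Finset _) : Set (Fin (n + 1))) := by
    refine Pi.mem_spanSubset_iff.2 fun l hl ↦ ?_
    simp only [coe_pair, Set.mem_insert_iff, Set.mem_singleton_iff, not_or] at hl
    rw [Pi.sub_apply, hci l hl.1, hcj l hl.2, sub_self]
  have hcc : c = c' := sub_eq_zero.1 <| Submodule.disjoint_def.1
    (disjoint_spanSubset_of_card_lt hC (by rw [card_pair hij]; omega)) _ (C.sub_mem hc hc') hdiff
  have hxc : c = x := by
    ext l
    by_cases hl : l = i
    · exact hcc ▸ hcj l (hl ▸ hij)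
    · exact hci l hl
  exact hxc ▸ hc

variable [Fintype F]

lemma numCodewordsOfWeight_comap_deleteCoord (D : Submodule F (Fin n → F)) (i : Fin (n + 1))
    (w : ℕ) :
    (numCodewordsOfWeight (D.comap (deleteCoord F i)) (w + 1) : ℤ)
      = numCodewordsOfWeight D (w + 1) + (Fintype.card F - 1) * numCodewordsOfWeight D w := by
  have hset : {x | x ∈ D.comap (deleteCoord F i) ∧ hammingNorm x = w + 1}
      = Fin.insertNthEquiv (fun _ ↦ F) i '' ({0} ×ˢ {y | y ∈ D ∧ hammingNorm y = w + 1}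
          ∪ {0}ᶜ ×ˢ {y | y ∈ D ∧ hammingNorm y = w}) := by
    rw [Equiv.image_eq_preimage_symm]
    ext x
    obtain ⟨⟨a, y⟩, rfl⟩ := (Fin.insertNthEquiv (fun _ ↦ F) i).surjective x
    by_cases ha : a = 0 <;>
      simp [Fin.insertNthEquiv, deleteCoord_insertNth, hammingNorm_insertNth, ha, add_comm 1]
  have hdisj : Disjoint (({0} : Set F) ×ˢ {y | y ∈ D ∧ hammingNorm y = w + 1})
      ({0}ᶜ ×ˢ {y | y ∈ D ∧ hammingNorm y = w}) :=
    Set.disjoint_prod.2 (Or.inl disjoint_compl_right)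
  have hunits : ((({0} : Set F)ᶜ.ncard : ℕ) : ℤ) = Fintype.card F - 1 := by
    rw [Set.ncard_compl, Set.ncard_singleton, Nat.card_eq_fintype_card,
      Nat.cast_sub Fintype.card_pos, Nat.cast_one]
  rw [numCodewordsOfWeight, hset, Set.ncard_image_of_injective _ (Equiv.injective _),
    Set.ncard_union_eq hdisj, Set.ncard_prod, Set.ncard_prod, Set.ncard_singleton, one_mul,
    Nat.cast_add, Nat.cast_mul, hunits]
  rfl

end Puncture

section Coset

variable {F : Type*} [Field F] [Fintype F] [DecidableEq F] {n : ℕ}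

lemma cosetWeight_le_iff {C : Submodule F (Fin n → F)} {x : Fin n → F} {m : ℕ} :
    cosetWeight C x ≤ m ↔ ∃ c ∈ C, hammingNorm (x - c) ≤ m := by
  refine ⟨fun h ↦ ?_, fun ⟨c, hc, h⟩ ↦ le_trans (Nat.sInf_le ⟨c, hc, rfl⟩) h⟩
  obtain ⟨c, hc, hx⟩ := Nat.sInf_mem
    (s := {m | ∃ c ∈ C, hammingNorm (x - c) = m}) ⟨_, 0, C.zero_mem, rfl⟩
  exact ⟨c, hc, hx.trans_le h⟩

lemma cosetWeight_eq_zero_iff {C : Submodule F (Fin n → F)} {x : Fin n → F} :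
    cosetWeight C x = 0 ↔ x ∈ C := by
  rw [← Nat.le_zero, cosetWeight_le_iff]
  simp only [Nat.le_zero, hammingNorm_eq_zero, sub_eq_zero, exists_eq_right']

lemma cosetWeight_le_one_iff {C : Submodule F (Fin (n + 1) → F)} {x : Fin (n + 1) → F} :
    cosetWeight C x ≤ 1 ↔ ∃ i, x ∈ freeAt C i := by
  have hnorm (c : Fin (n + 1) → F) : hammingNorm (x - c) ≤ 1 ↔ ∃ i, ∀ j ≠ i, c j = x j := by
    rw [hammingNorm, card_le_one_iff_subset_singleton]
    simp only [subset_iff, mem_filter_univ, mem_singleton, Pi.sub_apply, sub_ne_zero]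
    exact exists_congr fun i ↦ forall_congr' fun j ↦ by grind
  simp only [cosetWeight_le_iff, hnorm, mem_freeAt]
  exact ⟨fun ⟨c, hc, i, h⟩ ↦ ⟨i, c, hc, h⟩, fun ⟨i, c, hc, h⟩ ↦ ⟨c, hc, i, h⟩⟩

lemma cosetWeight_eq_one_iff {C : Submodule F (Fin (n + 1) → F)} {x : Fin (n + 1) → F} :
    cosetWeight C x = 1 ↔ ∃ i, x ∈ freeAt C i ∧ x ∉ C := by
  rw [exists_and_right, ← cosetWeight_le_one_iff, ← cosetWeight_eq_zero_iff]
  omega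

theorem numVectorsCosetExact_one_eq_sum {C : Submodule F (Fin (n + 1) → F)}
    (hC : ∀ c ∈ C, c ≠ 0 → 3 ≤ hammingNorm c) (w : ℕ) :
    (numVectorsCosetExact C w 1 : ℤ)
      = ∑ i, ((numCodewordsOfWeight (freeAt C i) w : ℤ) - numCodewordsOfWeight C w) := by
  have hset : {x | hammingNorm x = w ∧ cosetWeight C x = 1}
      = ⋃ i, {x | x ∈ freeAt C i ∧ hammingNorm x = w} \ {x | x ∈ C ∧ hammingNorm x = w} := by
    ext x
    simp only [cosetWeight_eq_one_iff, Set.mem_ofPred_eq, Set.mem_iUnion, Set.mem_sdiff]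
    grind
  have hdisj : Pairwise fun i j ↦ Disjoint
      ({x | x ∈ freeAt C i ∧ hammingNorm x = w} \ {x | x ∈ C ∧ hammingNorm x = w})
      ({x | x ∈ freeAt C j ∧ hammingNorm x = w} \ {x | x ∈ C ∧ hammingNorm x = w}) :=
    fun i j hij ↦ Set.disjoint_left.2 fun x hi hj ↦
      hi.2 ⟨(freeAt_inf_freeAt hC hij).le ⟨hi.1.1, hj.1.1⟩, hi.1.2⟩
  rw [numVectorsCosetExact, hset, Set.ncard_iUnion_of_finite (fun _ ↦ Set.toFinite _) hdisj,
    finsum_eq_sum_of_fintype, Nat.cast_sum]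
  exact sum_congr rfl fun i _ ↦
    Set.cast_ncard_sdiff (fun x hx ↦ ⟨le_freeAt C i hx.1, hx.2⟩) (Set.toFinite _)

theorem IsMDS.numVectorsCosetExact_one {C : Submodule F (Fin (n + 1) → F)} {d : ℕ}
    (hC : IsMDS C (d + 1)) (hd : 2 ≤ d) (w : ℕ) :
    (numVectorsCosetExact C (w + 1) 1 : ℤ)
      = (n + 1) * (n.choose (w + 1) * mdsSupportCount (Fintype.card F) d (w + 1)
          + (Fintype.card F - 1) * (n.choose w * mdsSupportCount (Fintype.card F) d w)
          - (n + 1).choose (w + 1) * mdsSupportCount (Fintype.card F) (d + 1) (w + 1)) := by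
  have hmin : ∀ c ∈ C, c ≠ 0 → 3 ≤ hammingNorm c := fun c hc hc0 ↦
    (Nat.succ_le_succ hd).trans (hC.le_hammingNorm c hc hc0)
  have hP (i : Fin (n + 1)) : IsMDS (puncture C i) d := hC.puncture (by omega) i
  simp only [numVectorsCosetExact_one_eq_sum hmin, freeAt, numCodewordsOfWeight_comap_deleteCoord,
    (hP _).numCodewordsOfWeight_eq, hC.numCodewordsOfWeight_eq, sum_const, card_univ,
    Fintype.card_fin, nsmul_eq_mul, Nat.cast_add, Nat.cast_one]

end Coset

theorem numVectorsCosetExact_one_eq'_general {F : Type*} [Field F] [Fintype F] [DecidableEq F]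
    (q n k d w : ℕ) (hq : Fintype.card F = q)
    (C : Submodule F (Fin n → F))
    (hk : Module.finrank F C = k) (hmin : HasMinDist C d) (hMDS : d + k = n + 1)
    (hd : 3 ≤ d) (hw : 2 ≤ w) :
    (numVectorsCosetExact C w 1 : ℤ) =
      (n : ℤ) * ((q : ℤ) - 1) *
        ((numCodewordsOfWeight C w : ℤ)
          - (-1 : ℤ) ^ (w + d) *
            ((n.choose w : ℤ) * ((w - 1).choose (d - 2) : ℤ)
              - ((n - 1).choose (w - 1) : ℤ) * ((w - 2).choose (d - 3) : ℤ))) := by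
  subst hq hk
  have hC : IsMDS C d := ⟨hmin.1, by rw [Fintype.card_fin, hMDS]⟩
  have hn : d ≤ n := by
    obtain ⟨c, -, -, rfl⟩ := hmin.2
    simpa only [Fintype.card_fin] using hammingNorm_le_card_fintype (x := c)
  obtain ⟨e, rfl⟩ := Nat.exists_eq_add_of_le' hd
  obtain ⟨v, rfl⟩ := Nat.exists_eq_add_of_le' hw
  obtain ⟨m, rfl⟩ := Nat.exists_eq_add_of_le' (show 1 ≤ n by omega)
  rw [hC.numVectorsCosetExact_one (by omega), hC.numCodewordsOfWeight_eq]
  have count_at_w := mdsSupportCount_eq_mul_add (Fintype.card F) (e + 1) (v + 1)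
  have count_at_pred := sub_one_mul_mdsSupportCount (Fintype.card F) (e + 1) v
  have pascal_m := Nat.choose_succ_succ m (v + 1)
  have pascal_v := Nat.choose_succ_succ v e
  simp only [Nat.succ_eq_add_one, add_assoc, Nat.reduceAdd, Nat.add_sub_cancel,
    Nat.reduceSubDiff] at count_at_pred count_at_w pascal_m pascal_v ⊢
  rw [count_at_w, pascal_m, pascal_v]
  push_cast
  linear_combination (m + 1) * (m.choose (v + 1) : ℤ) * count_at_pred

/-- **Integral weight spectrum of the weight-1 cosets of an MDS code** (Theorem 4.4(i),
eq. (4.7)).  For an `[n,k,d]_q` MDS code with `d ≥ 3` and `d-1 ≤ w ≤ n`,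
`A_w^Σ(V^{(1)}) = n(q-1)[ A_w(C) - (-1)^{w-d}( C(n,w)C(w-1,d-2) - C(n-1,w-1)C(w-2,d-3) ) ]`. -/
theorem numVectorsCosetExact_one_eq' {F : Type*} [Field F] [Fintype F] [DecidableEq F]
    (q n k d w : ℕ) (hq : Fintype.card F = q)
    (C : Submodule F (Fin n → F))
    (hk : Module.finrank F C = k) (hmin : HasMinDist C d) (hMDS : d + k = n + 1)
    (hd : 3 ≤ d) (hw1 : d - 1 ≤ w) (hwn : w ≤ n) :
    (numVectorsCosetExact C w 1 : ℤ) =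
      (n : ℤ) * ((q : ℤ) - 1) *
        ((numCodewordsOfWeight C w : ℤ)
          - (-1 : ℤ) ^ (w + d) *
            ((n.choose w : ℤ) * ((w - 1).choose (d - 2) : ℤ)
              - ((n - 1).choose (w - 1) : ℤ) * ((w - 2).choose (d - 3) : ℤ))) := by
  exact numVectorsCosetExact_one_eq'_general q n k d w hq C hk hmin hMDS hd (by omega)
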